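/- arXiv:1303.2989 — 7 statements merged into one kernel-verified Lean document; each statement's English description precedes it below -/
import Mathlib

section
/- Let I ⊆ ℝ be an interval, q : ℝ → ℝ, λ ∈ ℝ, and let φ, θ solve the Sturm–Liouville equation for (q,λ) on I with Wronskian φθ' − φ'θ = 1 on I. For j = 1, 2 let a_j, b_j, c_j be real constants and set U_j = (P_j,Q_j,R_j) := a_j·((θ')², −2θθ', θ²) + b_j·(θ'φ', −(θφ' + θ'φ), θφ) + c_j·((φ')², −2φφ', φ²). Then at every point of I, 2(P₁R₂ + P₂R₁) − Q₁Q₂ = 2(a₁c₂ + c₁a₂) − b₁b₂; in particular 4P₁R₁ − Q₁² = 4a₁c₁ − b₁². -/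
/-!
The triple `(P, Q, R)` lists the coefficients of the binary quadratic form
`P s² + Q s t + R t² = a u² + b u v + c v²` after the linear substitution
`u = θ' s - θ t`, `v = φ' s - φ t`, whose determinant is, up to sign, the Wronskian
`W = φ θ' - φ' θ`. The indefinite inner product is minus the polarised discriminant, so the
substitution multiplies it by `W²`. This is a pointwise polynomial identity, and `W = 1` on `I`.
-/

/-- `y` (with derivative `y'` and second derivative `y''`) solves the Sturm–Liouville
equation `-y'' + q y = λ y` for `(q, lam)` on `I`. -/
def SolvesSL (q : ℝ → ℝ) (lam : ℝ) (I : Set ℝ) (y y' y'' : ℝ → ℝ) : Prop :=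
  (∀ x ∈ I, HasDerivAt y (y' x) x) ∧ (∀ x ∈ I, HasDerivAt y' (y'' x) x) ∧
  (∀ x ∈ I, -y'' x + q x * y x = lam * y x)

theorem stmt3 (I : Set ℝ) (hI : I.OrdConnected) (q : ℝ → ℝ) (lam : ℝ)
    (φ φ' φ'' θ θ' θ'' : ℝ → ℝ)
    (hφ : SolvesSL q lam I φ φ' φ'') (hθ : SolvesSL q lam I θ θ' θ'')
    (hW : ∀ x ∈ I, φ x * θ' x - φ' x * θ x = 1)
    (a₁ b₁ c₁ a₂ b₂ c₂ : ℝ) :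
    ∀ x ∈ I,
      (2 * ((a₁ * (θ' x) ^ 2 + b₁ * (θ' x * φ' x) + c₁ * (φ' x) ^ 2) *
              (a₂ * (θ x) ^ 2 + b₂ * (θ x * φ x) + c₂ * (φ x) ^ 2)
            + (a₂ * (θ' x) ^ 2 + b₂ * (θ' x * φ' x) + c₂ * (φ' x) ^ 2) *
              (a₁ * (θ x) ^ 2 + b₁ * (θ x * φ x) + c₁ * (φ x) ^ 2))
        - (a₁ * (-2 * θ x * θ' x) + b₁ * (-(θ x * φ' x + θ' x * φ x)) + c₁ * (-2 * φ x * φ' x)) *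
          (a₂ * (-2 * θ x * θ' x) + b₂ * (-(θ x * φ' x + θ' x * φ x)) + c₂ * (-2 * φ x * φ' x))
        = 2 * (a₁ * c₂ + c₁ * a₂) - b₁ * b₂)
      ∧ (4 * (a₁ * (θ' x) ^ 2 + b₁ * (θ' x * φ' x) + c₁ * (φ' x) ^ 2) *
            (a₁ * (θ x) ^ 2 + b₁ * (θ x * φ x) + c₁ * (φ x) ^ 2)
          - (a₁ * (-2 * θ x * θ' x) + b₁ * (-(θ x * φ' x + θ' x * φ x)) + c₁ * (-2 * φ x * φ' x)) ^ 2
        = 4 * a₁ * c₁ - b₁ ^ 2) := by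
  intro x hx
  have h := hW x hx
  -- `LHS - RHS = RHS * (W ^ 2 - 1)` and `W ^ 2 - 1 = (W + 1) * (W - 1)`.
  constructor
  · linear_combination (2 * (a₁ * c₂ + c₁ * a₂) - b₁ * b₂) * (φ x * θ' x - φ' x * θ x + 1) * h
  · linear_combination (4 * a₁ * c₁ - b₁ ^ 2) * (φ x * θ' x - φ' x * θ x + 1) * h
end

section
/- Let I ⊆ ℝ be an interval, q : ℝ → ℝ, λ ∈ ℝ. If y solves the Sturm–Liouville equation for (q,λ) on I and (P,Q,R) solves the Appell system for (q,λ) on I, then the function P·y² + Q·y·y' + R·(y')² is constant on I. -/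
/-- `(P, Q, R)` solves the Appell system for `(q, lam)` on `I`:
`P' = (λ - q) Q`, `Q' = -2P + 2(λ - q) R`, `R' = -Q`. -/
def SolvesAppell (q : ℝ → ℝ) (lam : ℝ) (I : Set ℝ) (P Q R : ℝ → ℝ) : Prop :=
  (∀ x ∈ I, HasDerivAt P ((lam - q x) * Q x) x) ∧
  (∀ x ∈ I, HasDerivAt Q (-2 * P x + 2 * (lam - q x) * R x) x) ∧
  (∀ x ∈ I, HasDerivAt R (-Q x) x)

theorem stmt4 (I : Set ℝ) (hI : I.OrdConnected) (q : ℝ → ℝ) (lam : ℝ)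
    (y y' y'' : ℝ → ℝ) (hy : SolvesSL q lam I y y' y'')
    (P Q R : ℝ → ℝ) (hU : SolvesAppell q lam I P Q R) :
    ∃ C : ℝ, ∀ x ∈ I,
      P x * (y x) ^ 2 + Q x * y x * y' x + R x * (y' x) ^ 2 = C := by
  obtain ⟨hy1, hy2, heq⟩ := hy
  obtain ⟨hP, hQ, hR⟩ := hU
  have key : ∀ x ∈ I, HasDerivAt
      (fun x => P x * (y x) ^ 2 + Q x * y x * y' x + R x * (y' x) ^ 2) 0 x := by
    intro x hx
    have h := (((hP x hx).fun_mul ((hy1 x hx).fun_pow 2)).fun_add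
      (((hQ x hx).fun_mul (hy1 x hx)).fun_mul (hy2 x hx))).fun_add
      ((hR x hx).fun_mul ((hy2 x hx).fun_pow 2))
    refine h.congr_deriv ?_
    have e : y'' x = (q x - lam) * y x := by linear_combination -heq x hx
    rw [e]
    push_cast
    ring
  rcases I.eq_empty_or_nonempty with rfl | ⟨a, ha⟩
  · exact ⟨0, by simp⟩
  · refine ⟨P a * (y a) ^ 2 + Q a * y a * y' a + R a * (y' a) ^ 2, fun x hx => ?_⟩
    -- The mean value inequality with derivative bound `0` on the convex set `I`.
    have h := hI.convex.norm_image_sub_le_of_norm_hasDerivWithin_le (C := 0)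
      (fun z hz => (key z hz).hasDerivWithinAt) (by simp) ha hx
    rw [zero_mul, norm_le_zero_iff, sub_eq_zero] at h
    exact h
end

section
/- Let q : ℝ → ℝ be continuous on (0,∞), λ ∈ ℝ, and x₀ > 0. Suppose U₁ = (P₁,Q₁,R₁) solves the Appell system for (q,λ) on (0,∞), with R₁(x) > 0 for all x > 0 and 4P₁R₁ − Q₁² = 4 on (0,∞). Define γ(x) := ∫_{x₀}^{x} dt/R₁(t) and set U₂ := (P₁ cos 2γ + (Q₁/R₁) sin 2γ − (2/R₁) cos 2γ, Q₁ cos 2γ + 2 sin 2γ, R₁ cos 2γ) and U₃ := (P₁ sin 2γ − (Q₁/R₁) cos 2γ − (2/R₁) sin 2γ, Q₁ sin 2γ − 2 cos 2γ, R₁ sin 2γ). Then U₂ and U₃ solve the Appell system for (q,λ) on (0,∞), and every solution U of the Appell system for (q,λ) on (0,∞) can be written U = β₁U₁ + β₂U₂ + β₃U₃ for some real constants β₁, β₂, β₃. -/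
/-- `γ(x) = ∫_{x₀}^{x} dt / R₁(t)`. -/
noncomputable def appGam (R₁ : ℝ → ℝ) (x₀ x : ℝ) : ℝ := ∫ t in x₀..x, (R₁ t)⁻¹

/-- First component of the solution `U₂`. -/
noncomputable def appP2 (P₁ Q₁ R₁ : ℝ → ℝ) (x₀ : ℝ) : ℝ → ℝ := fun x =>
  P₁ x * Real.cos (2 * appGam R₁ x₀ x) + (Q₁ x / R₁ x) * Real.sin (2 * appGam R₁ x₀ x)
    - (2 / R₁ x) * Real.cos (2 * appGam R₁ x₀ x)

/-- Second component of the solution `U₂`. -/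
noncomputable def appQ2 (Q₁ R₁ : ℝ → ℝ) (x₀ : ℝ) : ℝ → ℝ := fun x =>
  Q₁ x * Real.cos (2 * appGam R₁ x₀ x) + 2 * Real.sin (2 * appGam R₁ x₀ x)

/-- Third component of the solution `U₂`. -/
noncomputable def appR2 (R₁ : ℝ → ℝ) (x₀ : ℝ) : ℝ → ℝ := fun x =>
  R₁ x * Real.cos (2 * appGam R₁ x₀ x)

/-- First component of the solution `U₃`. -/
noncomputable def appP3 (P₁ Q₁ R₁ : ℝ → ℝ) (x₀ : ℝ) : ℝ → ℝ := fun x =>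
  P₁ x * Real.sin (2 * appGam R₁ x₀ x) - (Q₁ x / R₁ x) * Real.cos (2 * appGam R₁ x₀ x)
    - (2 / R₁ x) * Real.sin (2 * appGam R₁ x₀ x)

/-- Second component of the solution `U₃`. -/
noncomputable def appQ3 (Q₁ R₁ : ℝ → ℝ) (x₀ : ℝ) : ℝ → ℝ := fun x =>
  Q₁ x * Real.sin (2 * appGam R₁ x₀ x) - 2 * Real.cos (2 * appGam R₁ x₀ x)

/-- Third component of the solution `U₃`. -/
noncomputable def appR3 (R₁ : ℝ → ℝ) (x₀ : ℝ) : ℝ → ℝ := fun x =>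
  R₁ x * Real.sin (2 * appGam R₁ x₀ x)

/-- The symmetric bilinear form `2 (P R' + P' R) - Q Q'` on triples `(P, Q, R)`, `(P', Q', R')`,
whose quadratic form is `4 P R - Q ^ 2`. -/
def appForm (P Q R P' Q' R' : ℝ) : ℝ := 2 * (P * R' + P' * R) - Q * Q'

theorem SolvesAppell.form_const {q : ℝ → ℝ} {lam : ℝ} {P Q R P' Q' R' : ℝ → ℝ}
    (h : SolvesAppell q lam (Set.Ioi 0) P Q R) (h' : SolvesAppell q lam (Set.Ioi 0) P' Q' R')
    {x y : ℝ} (hx : 0 < x) (hy : 0 < y) :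
    appForm (P x) (Q x) (R x) (P' x) (Q' x) (R' x) =
      appForm (P y) (Q y) (R y) (P' y) (Q' y) (R' y) := by
  have key : ∀ t ∈ Set.Ioi (0 : ℝ),
      HasDerivAt (fun t => appForm (P t) (Q t) (R t) (P' t) (Q' t) (R' t)) 0 t := by
    intro t ht
    have := ((((h.1 t ht).mul (h'.2.2 t ht)).add ((h'.1 t ht).mul (h.2.2 t ht))).const_mul 2).sub
      ((h.2.1 t ht).mul (h'.2.1 t ht))
    refine this.congr_deriv ?_
    ring
  refine isOpen_Ioi.is_const_of_deriv_eq_zero isPreconnected_Ioi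
    (fun t ht => (key t ht).differentiableAt.differentiableWithinAt)
    (fun t ht => (key t ht).deriv) hx hy

theorem hasDerivAt_appGam {R₁ : ℝ → ℝ} {x₀ x : ℝ} (hx₀ : 0 < x₀)
    (hR : ContinuousOn R₁ (Set.Ioi 0)) (hpos : ∀ x ∈ Set.Ioi (0 : ℝ), 0 < R₁ x) (hx : 0 < x) :
    HasDerivAt (appGam R₁ x₀) (R₁ x)⁻¹ x := by
  have hc : ContinuousOn (fun t => (R₁ t)⁻¹) (Set.Ioi 0) :=
    hR.inv₀ fun t ht => (hpos t ht).ne'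
  have hsub : Set.uIcc x₀ x ⊆ Set.Ioi 0 := fun t ht => lt_of_lt_of_le (lt_min hx₀ hx) ht.1
  exact intervalIntegral.integral_hasDerivAt_right (hc.mono hsub).intervalIntegrable
    (hc.stronglyMeasurableAtFilter isOpen_Ioi x hx) (hc.continuousAt (Ioi_mem_nhds hx))

/-- A pair `(c, s)` rotating with angular speed `2 / R₁` turns a normalised solution into another
solution. -/
theorem SolvesAppell.rotate {q : ℝ → ℝ} {lam : ℝ} {P Q R c s : ℝ → ℝ}
    (h : SolvesAppell q lam (Set.Ioi 0) P Q R)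
    (hpos : ∀ x ∈ Set.Ioi (0 : ℝ), 0 < R x)
    (hnorm : ∀ x ∈ Set.Ioi (0 : ℝ), 4 * P x * R x - (Q x) ^ 2 = 4)
    (hc : ∀ x ∈ Set.Ioi (0 : ℝ), HasDerivAt c (-2 * s x / R x) x)
    (hs : ∀ x ∈ Set.Ioi (0 : ℝ), HasDerivAt s (2 * c x / R x) x) :
    SolvesAppell q lam (Set.Ioi 0)
      (fun x => P x * c x + (Q x / R x) * s x - (2 / R x) * c x)
      (fun x => Q x * c x + 2 * s x) (fun x => R x * c x) := by
  obtain ⟨hP, hQ, hR⟩ := h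
  refine ⟨fun x hx => ?_, fun x hx => ?_, fun x hx => ?_⟩
  · have hne := (hpos x hx).ne'
    have := (((hP x hx).mul (hc x hx)).add (((hQ x hx).div (hR x hx) hne).mul (hs x hx))).sub
      (((hasDerivAt_const x (2 : ℝ)).div (hR x hx) hne).mul (hc x hx))
    refine this.congr_deriv ?_
    simp only [Pi.div_apply]
    field_simp
    linear_combination (-s x) * hnorm x hx
  · have hne := (hpos x hx).ne'
    refine (((hQ x hx).mul (hc x hx)).add ((hs x hx).const_mul 2)).congr_deriv ?_
    field_simp
    ring
  · have hne := (hpos x hx).ne'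
    refine ((hR x hx).mul (hc x hx)).congr_deriv ?_
    field_simp
    ring

/-- Expansion of a triple in the `B`-orthogonal basis `U₁, U₂, U₃` at a single point, where `c`
and `s` stand for `cos 2γ` and `sin 2γ`. -/
theorem appell_expand {P₁ Q₁ R₁ c s P Q R : ℝ} (hR : R₁ ≠ 0)
    (hn : 4 * P₁ * R₁ - Q₁ ^ 2 = 4) (hcs : s ^ 2 + c ^ 2 = 1) :
    let P₂ := P₁ * c + (Q₁ / R₁) * s - (2 / R₁) * c
    let Q₂ := Q₁ * c + 2 * s
    let R₂ := R₁ * c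
    let P₃ := P₁ * s - (Q₁ / R₁) * c - (2 / R₁) * s
    let Q₃ := Q₁ * s - 2 * c
    let R₃ := R₁ * s
    let β₁ := appForm P Q R P₁ Q₁ R₁ / 4
    let β₂ := -appForm P Q R P₂ Q₂ R₂ / 4
    let β₃ := -appForm P Q R P₃ Q₃ R₃ / 4
    P = β₁ * P₁ + β₂ * P₂ + β₃ * P₃ ∧
    Q = β₁ * Q₁ + β₂ * Q₂ + β₃ * Q₃ ∧
    R = β₁ * R₁ + β₂ * R₂ + β₃ * R₃ := by
  have hP : P₁ = (4 + Q₁ ^ 2) / (4 * R₁) := by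
    field_simp
    linear_combination hn
  have hc : c ^ 2 = 1 - s ^ 2 := by linear_combination hcs
  simp only [appForm]
  subst hP
  refine ⟨?_, ?_, ?_⟩
  · field_simp
    ring_nf
    simp only [hc]
    ring
  · field_simp
    ring_nf
    simp only [hc]
    ring
  · field_simp
    ring_nf
    simp only [hc]
    ring

theorem stmt8 (q : ℝ → ℝ) (hq : ContinuousOn q (Set.Ioi 0)) (lam x₀ : ℝ) (hx₀ : 0 < x₀)
    (P₁ Q₁ R₁ : ℝ → ℝ) (h₁ : SolvesAppell q lam (Set.Ioi 0) P₁ Q₁ R₁)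
    (hpos : ∀ x ∈ Set.Ioi (0 : ℝ), 0 < R₁ x)
    (hnorm : ∀ x ∈ Set.Ioi (0 : ℝ), 4 * P₁ x * R₁ x - (Q₁ x) ^ 2 = 4) :
    SolvesAppell q lam (Set.Ioi 0) (appP2 P₁ Q₁ R₁ x₀) (appQ2 Q₁ R₁ x₀) (appR2 R₁ x₀) ∧
    SolvesAppell q lam (Set.Ioi 0) (appP3 P₁ Q₁ R₁ x₀) (appQ3 Q₁ R₁ x₀) (appR3 R₁ x₀) ∧
    ∀ P Q R : ℝ → ℝ, SolvesAppell q lam (Set.Ioi 0) P Q R →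
      ∃ β₁ β₂ β₃ : ℝ, ∀ x ∈ Set.Ioi (0 : ℝ),
        P x = β₁ * P₁ x + β₂ * appP2 P₁ Q₁ R₁ x₀ x + β₃ * appP3 P₁ Q₁ R₁ x₀ x ∧
        Q x = β₁ * Q₁ x + β₂ * appQ2 Q₁ R₁ x₀ x + β₃ * appQ3 Q₁ R₁ x₀ x ∧
        R x = β₁ * R₁ x + β₂ * appR2 R₁ x₀ x + β₃ * appR3 R₁ x₀ x := by
  have hγ : ∀ x ∈ Set.Ioi (0 : ℝ),
      HasDerivAt (fun x => 2 * appGam R₁ x₀ x) (2 * (R₁ x)⁻¹) x := fun x hx =>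
    (hasDerivAt_appGam hx₀ (fun t ht => (h₁.2.2 t ht).continuousAt.continuousWithinAt)
      hpos hx).const_mul 2
  have h₂ : SolvesAppell q lam (Set.Ioi 0)
      (appP2 P₁ Q₁ R₁ x₀) (appQ2 Q₁ R₁ x₀) (appR2 R₁ x₀) :=
    h₁.rotate hpos hnorm (c := fun x => Real.cos (2 * appGam R₁ x₀ x))
      (s := fun x => Real.sin (2 * appGam R₁ x₀ x))
      (fun x hx => (hγ x hx).cos.congr_deriv (by ring))
      (fun x hx => (hγ x hx).sin.congr_deriv (by ring))
  have h₃ : SolvesAppell q lam (Set.Ioi 0)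
      (appP3 P₁ Q₁ R₁ x₀) (appQ3 Q₁ R₁ x₀) (appR3 R₁ x₀) := by
    convert h₁.rotate hpos hnorm (c := fun x => Real.sin (2 * appGam R₁ x₀ x))
      (s := fun x => -Real.cos (2 * appGam R₁ x₀ x))
      (fun x hx => (hγ x hx).sin.congr_deriv (by ring))
      (fun x hx => (hγ x hx).cos.neg.congr_deriv (by ring)) using 1
    · funext x
      simp only [appP3]
      ring
    · funext x
      simp only [appQ3]
      ring
    · rfl
  refine ⟨h₂, h₃, fun P Q R h => ?_⟩
  -- The coefficients are `B(U, Uᵢ) / B(Uᵢ, Uᵢ)`, evaluated at `x₀`.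
  refine ⟨appForm (P x₀) (Q x₀) (R x₀) (P₁ x₀) (Q₁ x₀) (R₁ x₀) / 4,
    -appForm (P x₀) (Q x₀) (R x₀) (appP2 P₁ Q₁ R₁ x₀ x₀) (appQ2 Q₁ R₁ x₀ x₀)
      (appR2 R₁ x₀ x₀) / 4,
    -appForm (P x₀) (Q x₀) (R x₀) (appP3 P₁ Q₁ R₁ x₀ x₀) (appQ3 Q₁ R₁ x₀ x₀)
      (appR3 R₁ x₀ x₀) / 4, fun x hx => ?_⟩
  rw [h.form_const h₁ hx₀ hx, h.form_const h₂ hx₀ hx, h.form_const h₃ hx₀ hx]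
  exact appell_expand (hpos x hx).ne' (hnorm x hx) (Real.sin_sq_add_cos_sq _)
end

section
/- Let q : ℝ → ℝ be continuous on (0,∞), λ ∈ ℝ, and x₀ > 0. Suppose U₁ = (P₁,Q₁,R₁) solves the Appell system for (q,λ) on (0,∞), with R₁(x) > 0 for all x > 0 and 4P₁R₁ − Q₁² = 4 on (0,∞); let γ(x) := ∫_{x₀}^{x} dt/R₁(t) and let U₂, U₃ be the solutions U₂ := (P₁ cos 2γ + (Q₁/R₁) sin 2γ − (2/R₁) cos 2γ, Q₁ cos 2γ + 2 sin 2γ, R₁ cos 2γ) and U₃ := (P₁ sin 2γ − (Q₁/R₁) cos 2γ − (2/R₁) sin 2γ, Q₁ sin 2γ − 2 cos 2γ, R₁ sin 2γ). Then for all real β₁, β₂, β₃ and β̃₁, β̃₂, β̃₃, at every x > 0, ⟨β₁U₁ + β₂U₂ + β₃U₃, β̃₁U₁ + β̃₂U₂ + β̃₃U₃⟩ = 4(β₁β̃₁ − β₂β̃₂ − β₃β̃₃); in particular ⟨U,U⟩ = 4(β₁² − β₂² − β₃²) for U = β₁U₁ + β₂U₂ + β₃U₃, and U₁, U₂, U₃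 are pairwise orthogonal: ⟨U₁,U₂⟩ = ⟨U₁,U₃⟩ = ⟨U₂,U₃⟩ = 0 on (0,∞). -/
theorem stmt9 (q : ℝ → ℝ) (hq : ContinuousOn q (Set.Ioi 0)) (lam x₀ : ℝ) (hx₀ : 0 < x₀)
    (P₁ Q₁ R₁ : ℝ → ℝ) (h₁ : SolvesAppell q lam (Set.Ioi 0) P₁ Q₁ R₁)
    (hpos : ∀ x ∈ Set.Ioi (0 : ℝ), 0 < R₁ x)
    (hnorm : ∀ x ∈ Set.Ioi (0 : ℝ), 4 * P₁ x * R₁ x - (Q₁ x) ^ 2 = 4) :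
    (∀ β₁ β₂ β₃ βa βb βc : ℝ, ∀ x ∈ Set.Ioi (0 : ℝ),
      2 * ((β₁ * P₁ x + β₂ * appP2 P₁ Q₁ R₁ x₀ x + β₃ * appP3 P₁ Q₁ R₁ x₀ x) *
             (βa * R₁ x + βb * appR2 R₁ x₀ x + βc * appR3 R₁ x₀ x)
           + (βa * P₁ x + βb * appP2 P₁ Q₁ R₁ x₀ x + βc * appP3 P₁ Q₁ R₁ x₀ x) *
             (β₁ * R₁ x + β₂ * appR2 R₁ x₀ x + β₃ * appR3 R₁ x₀ x))
        - (β₁ * Q₁ x + β₂ * appQ2 Q₁ R₁ x₀ x + β₃ * appQ3 Q₁ R₁ x₀ x) *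
          (βa * Q₁ x + βb * appQ2 Q₁ R₁ x₀ x + βc * appQ3 Q₁ R₁ x₀ x)
        = 4 * (β₁ * βa - β₂ * βb - β₃ * βc)) ∧
    (∀ β₁ β₂ β₃ : ℝ, ∀ x ∈ Set.Ioi (0 : ℝ),
      4 * (β₁ * P₁ x + β₂ * appP2 P₁ Q₁ R₁ x₀ x + β₃ * appP3 P₁ Q₁ R₁ x₀ x) *
          (β₁ * R₁ x + β₂ * appR2 R₁ x₀ x + β₃ * appR3 R₁ x₀ x)
        - (β₁ * Q₁ x + β₂ * appQ2 Q₁ R₁ x₀ x + β₃ * appQ3 Q₁ R₁ x₀ x) ^ 2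
        = 4 * (β₁ ^ 2 - β₂ ^ 2 - β₃ ^ 2)) ∧
    (∀ x ∈ Set.Ioi (0 : ℝ),
      2 * (P₁ x * appR2 R₁ x₀ x + appP2 P₁ Q₁ R₁ x₀ x * R₁ x)
        - Q₁ x * appQ2 Q₁ R₁ x₀ x = 0 ∧
      2 * (P₁ x * appR3 R₁ x₀ x + appP3 P₁ Q₁ R₁ x₀ x * R₁ x)
        - Q₁ x * appQ3 Q₁ R₁ x₀ x = 0 ∧
      2 * (appP2 P₁ Q₁ R₁ x₀ x * appR3 R₁ x₀ x + appP3 P₁ Q₁ R₁ x₀ x * appR2 R₁ x₀ x)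
        - appQ2 Q₁ R₁ x₀ x * appQ3 Q₁ R₁ x₀ x = 0) := by
  have main : ∀ β₁ β₂ β₃ βa βb βc : ℝ, ∀ x ∈ Set.Ioi (0 : ℝ),
      2 * ((β₁ * P₁ x + β₂ * appP2 P₁ Q₁ R₁ x₀ x + β₃ * appP3 P₁ Q₁ R₁ x₀ x) *
             (βa * R₁ x + βb * appR2 R₁ x₀ x + βc * appR3 R₁ x₀ x)
           + (βa * P₁ x + βb * appP2 P₁ Q₁ R₁ x₀ x + βc * appP3 P₁ Q₁ R₁ x₀ x) *
             (β₁ * R₁ x + β₂ * appR2 R₁ x₀ x + β₃ * appR3 R₁ x₀ x))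
        - (β₁ * Q₁ x + β₂ * appQ2 Q₁ R₁ x₀ x + β₃ * appQ3 Q₁ R₁ x₀ x) *
          (βa * Q₁ x + βb * appQ2 Q₁ R₁ x₀ x + βc * appQ3 Q₁ R₁ x₀ x)
        = 4 * (β₁ * βa - β₂ * βb - β₃ * βc) := by
    intro β₁ β₂ β₃ βa βb βc x hx
    have hr : R₁ x ≠ 0 := (hpos x hx).ne'
    have hn := hnorm x hx
    have hcs := Real.sin_sq_add_cos_sq (2 * appGam R₁ x₀ x)
    have e2 : appP2 P₁ Q₁ R₁ x₀ x * R₁ x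
        = P₁ x * R₁ x * Real.cos (2 * appGam R₁ x₀ x) + Q₁ x * Real.sin (2 * appGam R₁ x₀ x)
          - 2 * Real.cos (2 * appGam R₁ x₀ x) := by
      simp only [appP2]
      field_simp
    have e3 : appP3 P₁ Q₁ R₁ x₀ x * R₁ x
        = P₁ x * R₁ x * Real.sin (2 * appGam R₁ x₀ x) - Q₁ x * Real.cos (2 * appGam R₁ x₀ x)
          - 2 * Real.sin (2 * appGam R₁ x₀ x) := by
      simp only [appP3]
      field_simp
    simp only [appQ2, appQ3, appR2, appR3]
    generalize Real.cos (2 * appGam R₁ x₀ x) = c at *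
    generalize Real.sin (2 * appGam R₁ x₀ x) = s at *
    -- `β₁ + β₂ c + β₃ s` and `βa + βb c + βc s` are the third components divided by `R₁ x`.
    linear_combination
      2 * (β₂ * (βa + βb * c + βc * s) + βb * (β₁ + β₂ * c + β₃ * s)) * e2
      + 2 * (β₃ * (βa + βb * c + βc * s) + βc * (β₁ + β₂ * c + β₃ * s)) * e3
      + (β₁ + β₂ * c + β₃ * s) * (βa + βb * c + βc * s) * hn
      - 4 * (β₂ * βb + β₃ * βc) * hcs
  refine ⟨main, fun β₁ β₂ β₃ x hx => ?_, fun x hx => ⟨?_, ?_, ?_⟩⟩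
  · linear_combination main β₁ β₂ β₃ β₁ β₂ β₃ x hx
  · linear_combination main 1 0 0 0 1 0 x hx
  · linear_combination main 1 0 0 0 0 1 x hx
  · linear_combination main 0 1 0 0 0 1 x hx
end

section
/- Let λ > 0, x₀ > 0, and let q : ℝ → ℝ be continuous on [x₀,∞). Suppose U₁ = (P₁,Q₁,R₁) solves the Appell system for (q,λ) on [x₀,∞), with R₁(x) > 0 for all x ≥ x₀ and (P₁(x),Q₁(x),R₁(x)) → (√λ, 0, 1/√λ) as x → ∞. Define γ(x) := ∫_{x₀}^{x} dt/R₁(t). Then for all real constants β₂, β₃, lim_{N→∞} (∫_{x₀}^{N} R₁(x)(β₂ cos 2γ(x) + β₃ sin 2γ(x)) dx) / (∫_{x₀}^{N} R₁(x) dx) = 0. -/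
open Filter Topology Set MeasureTheory

lemma intervalIntegrable_of_Ici {a : ℝ} {f : ℝ → ℝ} (hf : ContinuousOn f (Ici a)) {b c : ℝ}
    (hb : a ≤ b) (hc : a ≤ c) : IntervalIntegrable f volume b c :=
  (hf.mono fun _ hx => le_trans (le_min hb hc) hx.1).intervalIntegrable

lemma tendsto_integral_atTop {a l : ℝ} {R : ℝ → ℝ} (hR : ContinuousOn R (Ici a)) (hl : 0 < l)
    (hlim : Tendsto R atTop (𝓝 l)) :
    Tendsto (fun N => ∫ x in a..N, R x) atTop atTop := by
  obtain ⟨M, hM⟩ := eventually_atTop.1 (hlim.eventually (lt_mem_nhds (half_lt_self hl)))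
  set K := max M a
  have haK : a ≤ K := le_max_right _ _
  have key : ∀ᶠ N in atTop, (∫ x in a..K, R x) + (l / 2) * (N - K) ≤ ∫ x in a..N, R x := by
    filter_upwards [eventually_ge_atTop K] with N hN
    have hi := intervalIntegrable_of_Ici hR haK (haK.trans hN)
    rw [← intervalIntegral.integral_add_adjacent_intervals
      (intervalIntegrable_of_Ici hR le_rfl haK) hi]
    have h := intervalIntegral.integral_mono_on hN
      (intervalIntegrable_const (c := l / 2)) hi
      (fun x hx => (hM x ((le_max_left _ _).trans hx.1)).le)
    rw [intervalIntegral.integral_const, smul_eq_mul] at h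
    linarith
  refine tendsto_atTop_mono' _ key (tendsto_atTop_add_const_left _ _ ?_)
  exact Tendsto.const_mul_atTop (half_pos hl) (tendsto_atTop_add_const_right _ _ tendsto_id)

/-- Weighted Cesàro: if `k → 0` and the positive weight `R` has infinite total mass, then the
`R`-weighted mean of `k` over `[a, N]` tends to `0`. -/
lemma tendsto_weighted_mean_zero {a : ℝ} {R k : ℝ → ℝ} (hR : ContinuousOn R (Ici a))
    (hpos : ∀ x ∈ Ici a, 0 < R x) (hk : ContinuousOn k (Ici a)) (hlim : Tendsto k atTop (𝓝 0))
    (hD : Tendsto (fun N => ∫ x in a..N, R x) atTop atTop) :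
    Tendsto (fun N => (∫ x in a..N, R x * k x) / ∫ x in a..N, R x) atTop (𝓝 0) := by
  rw [Metric.tendsto_nhds]
  intro ε hε
  obtain ⟨M, hM⟩ := eventually_atTop.1 ((Metric.tendsto_nhds.1 hlim) (ε / 2) (half_pos hε))
  set K := max M a
  have haK : a ≤ K := le_max_right _ _
  set C := ∫ x in a..K, R x * k x with hC
  filter_upwards [eventually_ge_atTop K, hD.eventually_gt_atTop 0,
    hD.eventually_gt_atTop (|C| / (ε / 2))] with N hN hD0 hDC
  have hi := intervalIntegrable_of_Ici hR haK (haK.trans hN)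
  have hRk := hR.mul hk
  rw [dist_zero_right, Real.norm_eq_abs, abs_div, abs_of_pos hD0, div_lt_iff₀ hD0]
  rw [div_lt_iff₀ (half_pos hε)] at hDC
  have h1 := intervalIntegral.integral_add_adjacent_intervals
      (intervalIntegrable_of_Ici hRk le_rfl haK)
      (intervalIntegrable_of_Ici hRk haK (haK.trans hN))
  have h2 := intervalIntegral.integral_add_adjacent_intervals
      (intervalIntegrable_of_Ici hR le_rfl haK) hi
  have h3 : 0 ≤ ∫ x in a..K, R x :=
    intervalIntegral.integral_nonneg haK fun x hx => (hpos x hx.1).le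
  have h4 : ‖∫ x in K..N, R x * k x‖ ≤ ∫ x in K..N, (ε / 2) * R x := by
    refine intervalIntegral.norm_integral_le_of_norm_le hN (ae_of_all _ fun x hx => ?_)
      (hi.const_mul _)
    have hx0 := hpos x (haK.trans hx.1.le)
    have hkx := hM x ((le_max_left _ _).trans hx.1.le)
    rw [dist_zero_right] at hkx
    rw [norm_mul, Real.norm_of_nonneg hx0.le, mul_comm]
    exact mul_le_mul_of_nonneg_right hkx.le hx0.le
  rw [intervalIntegral.integral_const_mul, Real.norm_eq_abs] at h4
  have h5 : |∫ x in a..N, R x * k x| ≤ |C| + |∫ x in K..N, R x * k x| := by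
    have h1' : C + ∫ x in K..N, R x * k x = ∫ x in a..N, R x * k x := h1
    rw [← h1']; exact abs_add_le _ _
  have h6 : (ε / 2) * (∫ x in K..N, R x) ≤ (ε / 2) * ∫ x in a..N, R x :=
    mul_le_mul_of_nonneg_left (by linarith) (half_pos hε).le
  linarith

lemma appGam_continuousOn {a : ℝ} {R : ℝ → ℝ} (hR : ContinuousOn R (Ici a))
    (hpos : ∀ x ∈ Ici a, 0 < R x) : ContinuousOn (appGam R a) (Ici a) := by
  have hinv : ContinuousOn (fun t => (R t)⁻¹) (Ici a) := hR.inv₀ fun x hx => (hpos x hx).ne'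
  intro x hx
  have hx' : a ≤ x := hx
  have h : ContinuousOn (appGam R a) (uIcc a (x + 1)) := by
    refine intervalIntegral.continuousOn_primitive_interval ?_
    rw [uIcc_of_le (by linarith)]
    exact (hinv.mono Icc_subset_Ici_self).integrableOn_Icc
  rw [uIcc_of_le (by linarith)] at h
  refine (h x ⟨hx', by linarith⟩).mono_of_mem_nhdsWithin ?_
  rw [← Ici_inter_Iic]
  exact inter_mem self_mem_nhdsWithin (mem_nhdsWithin_of_mem_nhds (Iic_mem_nhds (by linarith)))

/-- The derivative is stated only at interior points: nothing is known about `R` to the left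
of `a`. -/
lemma appGam_hasDerivAt {a : ℝ} {R : ℝ → ℝ} (hR : ContinuousOn R (Ici a))
    (hpos : ∀ x ∈ Ici a, 0 < R x) {x : ℝ} (hx : a < x) :
    HasDerivAt (appGam R a) (R x)⁻¹ x := by
  have hinv : ContinuousOn (fun t => (R t)⁻¹) (Ici a) := hR.inv₀ fun x hx => (hpos x hx).ne'
  exact intervalIntegral.integral_hasDerivAt_right
    (intervalIntegrable_of_Ici hinv le_rfl hx.le)
    ((hinv.mono Ioi_subset_Ici_self).stronglyMeasurableAtFilter isOpen_Ioi x hx)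
    (hinv.continuousAt (Ici_mem_nhds hx))

theorem stmt11 (lam : ℝ) (hlam : 0 < lam) (x₀ : ℝ) (hx₀ : 0 < x₀)
    (q : ℝ → ℝ) (hq : ContinuousOn q (Set.Ici x₀))
    (P₁ Q₁ R₁ : ℝ → ℝ) (h₁ : SolvesAppell q lam (Set.Ici x₀) P₁ Q₁ R₁)
    (hpos : ∀ x ∈ Set.Ici x₀, 0 < R₁ x)
    (hP : Filter.Tendsto P₁ Filter.atTop (nhds (Real.sqrt lam)))
    (hQ : Filter.Tendsto Q₁ Filter.atTop (nhds 0))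
    (hR : Filter.Tendsto R₁ Filter.atTop (nhds (1 / Real.sqrt lam))) :
    ∀ β₂ β₃ : ℝ,
      Filter.Tendsto
        (fun N => (∫ x in x₀..N,
            R₁ x * (β₂ * Real.cos (2 * appGam R₁ x₀ x) + β₃ * Real.sin (2 * appGam R₁ x₀ x)))
          / (∫ x in x₀..N, R₁ x))
        Filter.atTop (nhds 0) := by
  intro β₂ β₃
  obtain ⟨-, hQ', hR'⟩ := h₁
  have hRc : ContinuousOn R₁ (Ici x₀) := fun x hx => (hR' x hx).continuousAt.continuousWithinAt
  have hQc : ContinuousOn Q₁ (Ici x₀) := fun x hx => (hQ' x hx).continuousAt.continuousWithinAt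
  set γ := appGam R₁ x₀ with hγ
  have hγc : ContinuousOn γ (Ici x₀) := appGam_continuousOn hRc hpos
  have hD := tendsto_integral_atTop hRc (by positivity) hR
  set s : ℝ → ℝ := fun x => β₂ * Real.sin (2 * γ x) - β₃ * Real.cos (2 * γ x) with hs
  have hsc : ContinuousOn s (Ici x₀) := by fun_prop
  have hsb : ∀ x, ‖s x‖ ≤ |β₂| + |β₃| := by
    intro x
    refine (norm_sub_le _ _).trans (add_le_add ?_ ?_)
    · rw [norm_mul]
      exact mul_le_of_le_one_right (abs_nonneg _) (Real.abs_sin_le_one _)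
    · rw [norm_mul]
      exact mul_le_of_le_one_right (abs_nonneg _) (Real.abs_cos_le_one _)
  have hsB : IsBoundedUnder (· ≤ ·) atTop ((‖·‖) ∘ s) :=
    isBoundedUnder_of ⟨_, hsb⟩
  have hmean := tendsto_weighted_mean_zero (k := fun x => Q₁ x * s x) hRc hpos (hQc.mul hsc)
    (hQ.zero_mul_isBoundedUnder_le hsB) hD
  set F : ℝ → ℝ := fun x => (1 / 2) * R₁ x ^ 2 * s x with hF
  have hFc : ContinuousOn F (Ici x₀) := by fun_prop
  have hg : ContinuousOn (fun x => R₁ x * (β₂ * Real.cos (2 * γ x) + β₃ * Real.sin (2 * γ x)))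
      (Ici x₀) := by fun_prop
  have hh : ContinuousOn (fun x => R₁ x * (Q₁ x * s x)) (Ici x₀) := by fun_prop
  have hFd : ∀ x, x₀ < x → HasDerivAt F
      (R₁ x * (β₂ * Real.cos (2 * γ x) + β₃ * Real.sin (2 * γ x)) - R₁ x * (Q₁ x * s x)) x := by
    intro x hx
    have h2 := (appGam_hasDerivAt hRc hpos hx).const_mul 2
    have hne := (hpos x hx.le).ne'
    have h3 : HasDerivAt F _ x := (((hR' x hx.le).pow 2).const_mul (1 / 2)).mul
      ((h2.sin.const_mul β₂).sub (h2.cos.const_mul β₃))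
    refine h3.congr_deriv ?_
    simp only [hs, hγ, Pi.pow_apply]
    field_simp
    ring
  have hsplit : ∀ N, x₀ ≤ N →
      (∫ x in x₀..N, R₁ x * (β₂ * Real.cos (2 * γ x) + β₃ * Real.sin (2 * γ x)))
        = (F N - F x₀) + ∫ x in x₀..N, R₁ x * (Q₁ x * s x) := by
    intro N hN
    have hgi := intervalIntegrable_of_Ici hg le_rfl hN
    have hhi := intervalIntegrable_of_Ici hh le_rfl hN
    have h := intervalIntegral.integral_eq_sub_of_hasDerivAt_of_le hN
      (hFc.mono Icc_subset_Ici_self) (fun x hx => hFd x hx.1) (hgi.sub hhi)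
    rw [intervalIntegral.integral_sub hgi hhi] at h
    linarith
  -- `F` is bounded near infinity, being the product of a convergent and a bounded function.
  have hFlim : Tendsto (fun N => (F N - F x₀) / ∫ x in x₀..N, R₁ x) atTop (𝓝 0) := by
    have hinv := hD.inv_tendsto_atTop
    have hA : Tendsto (fun N => ((1 / 2) * R₁ N ^ 2 * (∫ x in x₀..N, R₁ x)⁻¹) * s N)
        atTop (𝓝 0) := by
      refine Tendsto.zero_mul_isBoundedUnder_le ?_ hsB
      simpa only [mul_zero, Pi.inv_apply] using ((hR.pow 2).const_mul (1 / 2)).mul hinv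
    have hB := hA.sub (hinv.const_mul (F x₀))
    simp only [mul_zero, sub_zero] at hB
    refine hB.congr fun N => ?_
    simp only [hF, Pi.inv_apply, div_eq_mul_inv]
    ring
  have hsum := hFlim.add hmean
  rw [add_zero] at hsum
  refine hsum.congr' ?_
  filter_upwards [eventually_ge_atTop x₀] with N hN
  rw [hsplit N hN, add_div]
end

section
/- Let λ > 0 and x₀ ∈ ℝ, and let u, v : [x₀,∞) → ℝ be differentiable functions satisfying u(x)v'(x) − u'(x)v(x) = 1 for all x ≥ x₀. Let a, b, c be real numbers with 4ac − b² = 4, set R₁ := a·u² + b·u·v + c·v², and suppose R₁(x) → 1/√λ as x → ∞. Then a > 0, c > 0, and R₁(x) > 0 for all x ≥ x₀. -/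
/-!
The discriminant condition makes `a u² + b u v + c v²` a definite quadratic form in `(u, v)`:
completing the square gives `4 a R₁ = (2 a u + b v)² + 4 v² ≥ 0`, and `4 a c = 4 + b² > 0`.
The limit `1 / √λ` is positive, so `R₁` is positive somewhere, which fixes the sign `a > 0`;
then `c > 0` as well. The Wronskian identity forbids `u` and `v` from vanishing together,
so the form is strictly positive along `(u, v)`.
-/


theorem stmt12 (lam : ℝ) (hlam : 0 < lam) (x₀ : ℝ)
    (u u' v v' : ℝ → ℝ)
    (hu : ∀ x ∈ Set.Ici x₀, HasDerivAt u (u' x) x)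
    (hv : ∀ x ∈ Set.Ici x₀, HasDerivAt v (v' x) x)
    (hW : ∀ x ∈ Set.Ici x₀, u x * v' x - u' x * v x = 1)
    (a b c : ℝ) (habc : 4 * a * c - b ^ 2 = 4)
    (R₁ : ℝ → ℝ)
    (hR₁ : ∀ x ∈ Set.Ici x₀, R₁ x = a * (u x) ^ 2 + b * u x * v x + c * (v x) ^ 2)
    (hlim : Filter.Tendsto R₁ Filter.atTop (nhds (1 / Real.sqrt lam))) :
    0 < a ∧ 0 < c ∧ ∀ x ∈ Set.Ici x₀, 0 < R₁ x := by
  have hpos : 0 < 1 / Real.sqrt lam := by positivity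
  have hac : 0 < a * c := by nlinarith [sq_nonneg b]
  have hsq : ∀ x ∈ Set.Ici x₀, 4 * a * R₁ x = (2 * a * u x + b * v x) ^ 2 + 4 * (v x) ^ 2 := by
    intro x hx
    rw [hR₁ x hx]
    linear_combination (v x) ^ 2 * habc
  have ha0 : a ≠ 0 := left_ne_zero_of_mul hac.ne'
  have ha : 0 < a := by
    obtain ⟨x, hRx, hx⟩ :=
      ((hlim.eventually_const_lt hpos).and (Filter.eventually_ge_atTop x₀)).exists
    by_contra hneg
    have hlt : a < 0 := lt_of_le_of_ne (not_lt.mp hneg) ha0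
    nlinarith [hsq x hx, mul_neg_of_neg_of_pos hlt hRx, sq_nonneg (2 * a * u x + b * v x),
      sq_nonneg (v x)]
  refine ⟨ha, pos_of_mul_pos_right hac ha.le, fun x hx => ?_⟩
  by_contra hneg
  have hle : a * R₁ x ≤ 0 := mul_nonpos_of_nonneg_of_nonpos ha.le (not_lt.mp hneg)
  -- A nonpositive value forces both squares to vanish, hence `u x = v x = 0`.
  have hv0 : v x = 0 := by
    have : (v x) ^ 2 ≤ 0 := by nlinarith [hsq x hx, sq_nonneg (2 * a * u x + b * v x)]
    exact pow_eq_zero_iff two_ne_zero |>.mp (le_antisymm this (sq_nonneg _))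
  have hu0 : u x = 0 := by
    have h : (2 * a * u x + b * v x) ^ 2 ≤ 0 := by nlinarith [hsq x hx, sq_nonneg (v x)]
    have h0 := pow_eq_zero_iff two_ne_zero |>.mp (le_antisymm h (sq_nonneg _))
    simpa [hv0, ha0] using h0
  simpa [hv0, hu0] using hW x hx
end

section
/- Let λ > 0, x₀ > 0, and let q : ℝ → ℝ be continuous on [x₀,∞). Suppose y solves the Sturm–Liouville equation for (q,λ) on [x₀,∞) with both y and y' bounded on [x₀,∞), and suppose (P,Q,R) solves the Appell system for (q,λ) on [x₀,∞) with (P(x),Q(x),R(x)) → (√λ, 0, 1/√λ) as x → ∞. Then the function P·y² + Q·y·y' + R·(y')² is equal to a constant C on [x₀,∞), and √λ·y(x)² + (1/√λ)·y'(x)² → C as x → ∞. -/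
/-- A null function times two functions bounded on a half-line is null. -/
lemma tendsto_zero_mul_of_bounded {f u v : ℝ → ℝ} {a A B : ℝ}
    (hf : Filter.Tendsto f Filter.atTop (nhds 0))
    (hu : ∀ x ∈ Set.Ici a, |u x| ≤ A) (hv : ∀ x ∈ Set.Ici a, |v x| ≤ B) :
    Filter.Tendsto (fun x => f x * (u x * v x)) Filter.atTop (nhds 0) := by
  have hlim : Filter.Tendsto (fun x => |f x| * (A * B)) Filter.atTop (nhds 0) := by
    simpa using hf.abs.mul_const (A * B)
  refine squeeze_zero_norm' ?_ hlim
  filter_upwards [Filter.eventually_ge_atTop a] with x hx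
  rw [Real.norm_eq_abs, abs_mul, abs_mul]
  exact mul_le_mul_of_nonneg_left
    (mul_le_mul (hu x hx) (hv x hx) (abs_nonneg _) ((abs_nonneg _).trans (hu x hx))) (abs_nonneg _)

/-- The quadratic form of an Appell solution, evaluated at a Sturm–Liouville solution, has zero
derivative. -/
lemma hasDerivAt_appellForm {q : ℝ → ℝ} {lam : ℝ} {I : Set ℝ} {y y' y'' P Q R : ℝ → ℝ}
    (hy : SolvesSL q lam I y y' y'') (hU : SolvesAppell q lam I P Q R) {x : ℝ} (hx : x ∈ I) :
    HasDerivAt (fun x => P x * (y x) ^ 2 + Q x * y x * y' x + R x * (y' x) ^ 2) 0 x := by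
  obtain ⟨hy1, hy2, hy3⟩ := hy
  obtain ⟨hP, hQ, hR⟩ := hU
  have h := (((hP x hx).mul ((hy1 x hx).pow 2)).add
    (((hQ x hx).mul (hy1 x hx)).mul (hy2 x hx))).add ((hR x hx).mul ((hy2 x hx).pow 2))
  have e : y'' x = -(lam - q x) * y x := by linarith [hy3 x hx]
  refine h.congr_deriv ?_
  simp only [Pi.mul_apply, Pi.pow_apply, e]
  push_cast
  ring

theorem stmt16 (lam : ℝ) (hlam : 0 < lam) (x₀ : ℝ) (hx₀ : 0 < x₀)
    (q : ℝ → ℝ) (hq : ContinuousOn q (Set.Ici x₀))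
    (y y' y'' : ℝ → ℝ) (hy : SolvesSL q lam (Set.Ici x₀) y y' y'')
    (hyb : ∃ M : ℝ, ∀ x ∈ Set.Ici x₀, |y x| ≤ M)
    (hy'b : ∃ M : ℝ, ∀ x ∈ Set.Ici x₀, |y' x| ≤ M)
    (P Q R : ℝ → ℝ) (hU : SolvesAppell q lam (Set.Ici x₀) P Q R)
    (hP : Filter.Tendsto P Filter.atTop (nhds (Real.sqrt lam)))
    (hQ : Filter.Tendsto Q Filter.atTop (nhds 0))
    (hR : Filter.Tendsto R Filter.atTop (nhds (1 / Real.sqrt lam))) :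
    ∃ C : ℝ,
      (∀ x ∈ Set.Ici x₀,
        P x * (y x) ^ 2 + Q x * y x * y' x + R x * (y' x) ^ 2 = C) ∧
      Filter.Tendsto
        (fun x => Real.sqrt lam * (y x) ^ 2 + (1 / Real.sqrt lam) * (y' x) ^ 2)
        Filter.atTop (nhds C) := by
  have hconst : ∀ x ∈ Set.Ici x₀, P x * (y x) ^ 2 + Q x * y x * y' x + R x * (y' x) ^ 2
      = P x₀ * (y x₀) ^ 2 + Q x₀ * y x₀ * y' x₀ + R x₀ * (y' x₀) ^ 2 := fun x hx =>
    constant_of_has_deriv_right_zero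
      (f := fun x => P x * (y x) ^ 2 + Q x * y x * y' x + R x * (y' x) ^ 2)
      (fun t ht => (hasDerivAt_appellForm hy hU ht.1).continuousAt.continuousWithinAt)
      (fun t ht => (hasDerivAt_appellForm hy hU ht.1).hasDerivWithinAt) x
      (Set.right_mem_Icc.2 hx)
  refine ⟨_, hconst, ?_⟩
  obtain ⟨M, hM⟩ := hyb
  obtain ⟨N, hN⟩ := hy'b
  have hP0 := tendsto_zero_mul_of_bounded (tendsto_sub_nhds_zero_iff.2 hP) hM hM
  have hQ0 := tendsto_zero_mul_of_bounded hQ hM hN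
  have hR0 := tendsto_zero_mul_of_bounded (tendsto_sub_nhds_zero_iff.2 hR) hN hN
  have h := ((hP0.add hQ0).add hR0).const_sub
    (P x₀ * (y x₀) ^ 2 + Q x₀ * y x₀ * y' x₀ + R x₀ * (y' x₀) ^ 2)
  rw [add_zero, add_zero, sub_zero] at h
  refine h.congr' ?_
  filter_upwards [Filter.eventually_ge_atTop x₀] with x hx
  rw [← hconst x hx]
  ring
end
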